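/- For every integer k ≥ 1 and every finite graph H, R(P_k, H) ≤ |H| + k·√(2·e(H)), where |H| is the number of vertices of H and e(H) its number of edges. -/

import Mathlib

/-- `G` has a copy in `C`: there is an injective graph homomorphism from `G` to `C`,
i.e. `C` contains `G` as a (not necessarily induced) subgraph. -/
def HasCopy {α β : Type*} (G : SimpleGraph α) (C : SimpleGraph β) : Prop :=
  ∃ f : G →g C, Function.Injective f

/-- The Ramsey number `R(G, H)`: the least `N` such that every red-blue colouring of the
edges of `K_N` (encoded by the graph `C` of red edges) contains a red copy of `G` or a
blue copy of `H`. -/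
noncomputable def ramseyNumber {α β : Type*} (G : SimpleGraph α) (H : SimpleGraph β) : ℕ :=
  sInf {N : ℕ | ∀ C : SimpleGraph (Fin N), HasCopy G C ∨ HasCopy H Cᶜ}

lemma hasCopy_path {W : Type*} (C : SimpleGraph W) (k : ℕ) (p : List W) (hn : p.Nodup)
    (hc : p.IsChain C.Adj) (hl : k ≤ p.length) : HasCopy (SimpleGraph.pathGraph k) C := by
  refine ⟨⟨fun i => p[i.val]'(by omega), ?_⟩, ?_⟩
  · intro a b hab
    rw [List.isChain_iff_getElem] at hc
    rw [SimpleGraph.pathGraph_adj] at hab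
    rcases hab with h | h
    · have := hc a.val (by omega)
      simpa only [h] using this
    · have := hc b.val (by omega)
      simp only [h] at this
      exact this.symm
  · intro a b hab
    have : p[a.val]'(by omega) = p[b.val]'(by omega) := hab
    rw [hn.getElem_inj_iff] at this
    exact Fin.ext this

lemma dfs_aux {W : Type*} [DecidableEq W] (C : SimpleGraph W) (k : ℕ) 
    (hC : ¬ HasCopy (SimpleGraph.pathGraph k) C) (U : Finset W) (a b : ℕ)
    (hab : a + b + (k - 1) ≤ U.card) (d : ℕ) :
    ∀ (S T : Finset W) (p : List W), 2 * T.card + p.length = d → S ⊆ U → T ⊆ U → Disjoint S T →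
      p.Nodup → p.IsChain C.Adj → (∀ x ∈ p, x ∉ T ∧ x ∉ S ∧ x ∈ U) →
      S.card + T.card + p.length = U.card → S.card ≤ a → (∀ s ∈ S, ∀ t ∈ T, ¬ C.Adj s t) →
      ∃ A B : Finset W, A ⊆ U ∧ B ⊆ U ∧ Disjoint A B ∧ A.card = a ∧ b ≤ B.card ∧
        ∀ s ∈ A, ∀ t ∈ B, ¬ C.Adj s t := by
  induction d using Nat.strong_induction_on with
  | _ d ih =>
  intro S T p hd hS hT hST hn hc hp hcard hSa hno
  have hlen : p.length < k := by
    by_contra h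
    exact hC (hasCopy_path C k p hn hc (by omega))
  by_cases hSa' : S.card = a
  · exact ⟨S, T, hS, hT, hST, hSa', by omega, hno⟩
  have push : ∀ t ∈ T, (t :: p).IsChain C.Adj → ∃ A B : Finset W, A ⊆ U ∧ B ⊆ U ∧ Disjoint A B ∧
      A.card = a ∧ b ≤ B.card ∧ ∀ s ∈ A, ∀ t ∈ B, ¬ C.Adj s t := by
    intro t ht hch
    have h1 := Finset.card_erase_add_one ht
    refine ih (2 * (T.erase t).card + (t :: p).length) ?_ S (T.erase t) (t :: p) rfl hS
      ((Finset.erase_subset _ _).trans hT) (hST.mono_right (Finset.erase_subset _ _)) ?_ hch ?_ ?_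
      hSa ?_
    · simp only [List.length_cons]; omega
    · exact List.nodup_cons.2 ⟨fun h => (hp t h).1 ht, hn⟩
    · intro x hx
      rcases List.mem_cons.1 hx with rfl | hx
      · exact ⟨by simp, fun h => Finset.disjoint_left.1 hST h ht, hT ht⟩
      · exact ⟨fun h => (hp x hx).1 (Finset.mem_of_mem_erase h), (hp x hx).2⟩
    · simp only [List.length_cons]; omega
    · exact fun s hs t ht => hno s hs t (Finset.mem_of_mem_erase ht)
  cases p with
  | nil =>
    have : 0 < T.card := by simp only [List.length_nil] at hcard; omega
    obtain ⟨t, ht⟩ := Finset.card_pos.1 this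
    exact push t ht (by simp)
  | cons v q =>
    by_cases hv : ∃ t ∈ T, C.Adj v t
    · obtain ⟨t, ht, hvt⟩ := hv
      exact push t ht (List.isChain_cons_cons.2 ⟨hvt.symm, hc⟩)
    · push Not at hv
      have hv' := hp v (by simp)
      have h1 := Finset.card_insert_of_notMem hv'.2.1
      simp only [List.length_cons] at *
      refine ih (2 * T.card + q.length) (by omega) (insert v S) T q rfl
        (Finset.insert_subset hv'.2.2 hS) hT (Finset.disjoint_insert_left.2 ⟨hv'.1, hST⟩)
        (List.nodup_cons.1 hn).2 hc.tail ?_ (by omega) (by omega) ?_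
      · intro x hx
        have := hp x (List.mem_cons_of_mem _ hx)
        refine ⟨this.1, fun h => ?_, this.2.2⟩
        rcases Finset.mem_insert.1 h with rfl | h
        · exact (List.nodup_cons.1 hn).1 hx
        · exact this.2.1 h
      · intro s hs
        rcases Finset.mem_insert.1 hs with rfl | h
        · exact hv
        · exact hno s h

lemma parts {W : Type*} [DecidableEq W] (C : SimpleGraph W) (k : ℕ) 
    (hC : ¬ HasCopy (SimpleGraph.pathGraph k) C) (n : ℕ → ℕ) (r : ℕ) :
    ∀ U : Finset W, ∑ i ∈ Finset.range (r + 1), n i + r * (k - 1) ≤ U.card →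
    ∃ A : ℕ → Finset W, (∀ i < r + 1, A i ⊆ U ∧ (A i).card = n i) ∧
      ∀ i < r + 1, ∀ j < r + 1, i ≠ j → Disjoint (A i) (A j) ∧
        ∀ s ∈ A i, ∀ t ∈ A j, ¬ C.Adj s t := by
  induction r with
  | zero =>
    intro U hU
    obtain ⟨B, hB, hB'⟩ := Finset.exists_subset_card_eq (s := U) (n := n 0) (by simpa using hU)
    refine ⟨fun _ => B, ?_, ?_⟩
    · intro i hi
      obtain rfl : i = 0 := by omega
      exact ⟨hB, hB'⟩
    · intro i hi j hj; omega
  | succ r ih =>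
    intro U hU
    rw [Finset.sum_range_succ, Nat.succ_mul] at hU
    obtain ⟨A, B, hA, hB, hAB, hAc, hBc, hno⟩ := dfs_aux C k hC U (n (r + 1))
      (∑ i ∈ Finset.range (r + 1), n i + r * (k - 1)) (by omega) _ ∅ U [] rfl (by simp) (by simp)
      (by simp) (by simp) (by simp) (by simp) (by simp) (by simp) (by simp)
    obtain ⟨F, hF, hF'⟩ := ih B hBc
    refine ⟨fun i => if i = r + 1 then A else F i, ?_, ?_⟩
    · intro i hi
      by_cases h : i = r + 1
      · simp only [h, if_true]; exact ⟨hA, hAc⟩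
      · simp only [h, if_false]
        have := hF i (by omega)
        exact ⟨this.1.trans hB, this.2⟩
    · intro i hi j hj hij
      by_cases h : i = r + 1
      · have h' : j ≠ r + 1 := by omega
        simp only [h, h', if_true, if_false]
        have := (hF j (by omega)).1
        exact ⟨hAB.mono_right this, fun s hs t ht => hno s hs t (this ht)⟩
      · by_cases h' : j = r + 1
        · simp only [h, h', if_true, if_false]
          have := (hF i (by omega)).1
          exact ⟨(hAB.mono_right this).symm, fun s hs t ht hst => hno t ht s (this hs) hst.symm⟩
        · simp only [h, h', if_false]
          exact hF' i (by omega) j (by omega) hij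

lemma chrom {V : Type} [Fintype V] [DecidableEq V]
    (H : SimpleGraph V) [DecidableRel H.Adj] :
    ∃ r : ℕ, H.Colorable (r + 1) ∧ r * r ≤ 2 * H.edgeFinset.card := by
  classical
  have hex : ∃ n, H.Colorable n := ⟨_, H.colorable_of_fintype⟩
  obtain ⟨n, hn, hmin⟩ : ∃ n, H.Colorable n ∧ ∀ m < n, ¬ H.Colorable m :=
    ⟨Nat.find hex, Nat.find_spec hex, fun m hm => Nat.find_min hex hm⟩
  cases n with
  | zero => exact ⟨0, hn.mono (by omega), by simp⟩
  | succ r =>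
    refine ⟨r, hn, ?_⟩
    obtain ⟨c⟩ := hn
    have key : ∀ i j : Fin (r + 1), i ≠ j → ∃ u v, H.Adj u v ∧ c u = i ∧ c v = j := by
      intro i j hij
      by_contra hcon
      push Not at hcon
      apply hmin r (by omega)
      let c' : H.Coloring {x : Fin (r + 1) // x ≠ j} :=
        SimpleGraph.Coloring.mk (fun v => if h : c v = j then ⟨i, hij⟩ else ⟨c v, h⟩) (by
          intro u v huv
          have h0 := c.valid huv
          have h1 := hcon u v huv
          have h2 := hcon v u huv.symm
          by_cases hu : c u = j <;> by_cases hv : c v = j <;> simp [hu, hv] <;> grind)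
      have := c'.colorable
      simpa using this
    have hle : (Finset.univ : Finset (Fin (r + 1))).offDiag.card ≤ Fintype.card H.Dart := by
      rw [← Finset.card_univ]
      apply Finset.card_le_card_of_surjOn (fun d : H.Dart => (c d.fst, c d.snd))
      rintro ⟨i, j⟩ hij
      have hij' : i ≠ j := by simpa using hij
      obtain ⟨u, v, huv, rfl, rfl⟩ := key i j hij'
      exact ⟨⟨(u, v), huv⟩, by simp, rfl⟩
    rw [SimpleGraph.dart_card_eq_twice_card_edges, Finset.offDiag_card] at hle
    simp only [Finset.card_univ, Fintype.card_fin] at hle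
    have : (r + 1) * (r + 1) - (r + 1) = r * r + r := by
      have : (r + 1) * (r + 1) = r * r + r + (r + 1) := by ring
      omega
    omega

theorem stmt_5 (k : ℕ) (hk : 1 ≤ k) (V : Type) [Fintype V] [DecidableEq V]
    (H : SimpleGraph V) [DecidableRel H.Adj] :
    (ramseyNumber (SimpleGraph.pathGraph k) H : ℝ) ≤
      Fintype.card V + k * Real.sqrt (2 * H.edgeFinset.card) := by
  classical
  obtain ⟨r, ⟨c⟩, hr⟩ := chrom H
  have hmain : ramseyNumber (SimpleGraph.pathGraph k) H ≤ Fintype.card V + r * (k - 1) := by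
    apply Nat.sInf_le
    intro C
    by_cases hC : HasCopy (SimpleGraph.pathGraph k) C
    · exact Or.inl hC
    right
    have hsum : ∑ i ∈ Finset.range (r + 1),
        (Finset.univ.filter (fun v => (c v).val = i)).card = Fintype.card V := by
      rw [← Finset.card_univ]
      exact (Finset.card_eq_sum_card_fiberwise (f := fun v => (c v).val)
        (fun v _ => by have := (c v).2; simp; omega)).symm
    obtain ⟨A, hA, hA'⟩ := parts C k hC
      (fun i => (Finset.univ.filter (fun v => (c v).val = i)).card) r Finset.univ
      (by rw [hsum]; simp)
    have hg : ∀ i : Fin (r + 1), ∃ g : V → Fin (Fintype.card V + r * (k - 1)),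
        (∀ v, c v = i → g v ∈ A i) ∧ ∀ u v, c u = i → c v = i → g u = g v → u = v := by
      intro i
      have e := Finset.equivOfCardEq (hA i i.2).2.symm
      refine ⟨fun v => if h : c v = i then (e ⟨v, by simp [h]⟩).1 else ⟨0, ?_⟩, ?_, ?_⟩
      · have : 0 < Fintype.card V := Fintype.card_pos_iff.2 ⟨v⟩
        omega
      · intro v hv
        simp only [hv, dif_pos]
        exact (e _).2
      · intro u v hu hv huv
        simp only [hu, hv, dif_pos] at huv
        have := e.injective (Subtype.ext huv)
        simpa using this
    choose g hg1 hg2 using hg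
    have hinj : Function.Injective (fun v => g (c v) v) := by
      intro u v huv
      simp only at huv
      by_cases h : c u = c v
      · rw [h] at huv
        exact hg2 (c v) u v h rfl huv
      · have hd := (hA' (c u) (c u).2 (c v) (c v).2 (fun h' => h (Fin.ext h'))).1
        exact absurd (huv ▸ hg1 (c v) v rfl) (Finset.disjoint_left.1 hd (hg1 (c u) u rfl))
    refine ⟨⟨fun v => g (c v) v, ?_⟩, hinj⟩
    intro u v huv
    rw [SimpleGraph.compl_adj]
    refine ⟨fun h => huv.ne (hinj h), ?_⟩
    exact (hA' (c u) (c u).2 (c v) (c v).2 (fun h' => c.valid huv (Fin.ext h'))).2 _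
      (hg1 (c u) u rfl) _ (hg1 (c v) v rfl)
  have h1 : (ramseyNumber (SimpleGraph.pathGraph k) H : ℝ) ≤ Fintype.card V + k * r := by
    have : r * (k - 1) ≤ k * r := by
      rw [mul_comm]; exact Nat.mul_le_mul_right _ (Nat.sub_le _ _)
    exact_mod_cast hmain.trans (by omega)
  have h2 : (r : ℝ) ≤ Real.sqrt (2 * H.edgeFinset.card) := by
    apply Real.le_sqrt_of_sq_le
    rw [sq]
    exact_mod_cast hr
  have h3 : (k : ℝ) * r ≤ k * Real.sqrt (2 * H.edgeFinset.card) := by gcongr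
  linarith
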